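/- arXiv:1812.04294 — 4 statements merged into one kernel-verified Lean document; each statement's English description precedes it below -/
import Mathlib

section
/- Let s be an even positive integer and n an integer with n > 3s and n not congruent to 1 or -1 modulo 8. Then both polynomials f(X) = X^n + X^(n-s) + X^(n-2s) + X^(n-3s) + 1 and g(X) = X^n + X^(3s) + X^(2s) + X^s + 1 in F_2[X] are reducible (i.e., not irreducible) over F_2. -/
open Polynomial

/-!
If `n` is even, both polynomials are squares. For `n` odd, write `s = 2t`; then `g` is the reduction
mod 2 of `F = X ^ n + (X ^ t + 1) ^ 6` over `ℤ`. By a theorem of Stickelberger, a monic integer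
polynomial of odd degree that is irreducible mod 2 has discriminant `≡ 1 mod 8`: over the Witt
vectors of the residue field its roots form a single Frobenius orbit, cyclically permuted by an even
permutation, so their Vandermonde determinant is a 2-adic unit fixed by Frobenius and its square is
`1` mod 8. On the other hand the discriminant of `F` is `± n ^ n ≡ ± n` mod 8, because `X` times
the derivative of `F` is congruent mod `F` to the product of `-(X ^ t + 1) ^ 5` and a binomial
which, mod 8, is a unit times a divisor of `(X ^ t + 1) ^ 6`. Finally `f` is the mirror of `g`.
-/

section Resultant

variable {R S : Type*} [CommRing R] [CommRing S] {f : R[X]}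

lemma resultant_eq_of_natDegree_le_of_monic (hf : f.Monic) {g : R[X]} {d : ℕ}
    (hg : g.natDegree ≤ d) : resultant f g f.natDegree d = resultant f g := by
  obtain ⟨e, rfl⟩ := Nat.exists_eq_add_of_le hg
  rw [resultant_add_right_deg _ _ _ _ _ le_rfl, coeff_natDegree, hf.leadingCoeff, one_pow, one_mul]

lemma resultant_mul_right_of_monic (hf : f.Monic) (g h : R[X]) :
    resultant f (g * h) = resultant f g * resultant f h := by
  rw [← resultant_mul_right f g h _ le_rfl,
    resultant_eq_of_natDegree_le_of_monic hf natDegree_mul_le]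

lemma resultant_pow_right_of_monic (hf : f.Monic) (g : R[X]) (k : ℕ) :
    resultant f (g ^ k) = resultant f g ^ k := by
  induction k with
  | zero => simp
  | succ k ih => rw [pow_succ, resultant_mul_right_of_monic hf, ih, pow_succ]

lemma resultant_add_mul_right_of_monic (hf : f.Monic) (g p : R[X]) :
    resultant f (g + f * p) = resultant f g := by
  have hg : g.natDegree ≤ g.natDegree + (p.natDegree + f.natDegree) := by omega
  have hgp : (g + f * p).natDegree ≤ g.natDegree + (p.natDegree + f.natDegree) := by
    compute_degree
    omega
  rw [← resultant_eq_of_natDegree_le_of_monic hf hgp, ← resultant_eq_of_natDegree_le_of_monic hf hg,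
    resultant_add_mul_right _ _ _ _ _ (by omega) le_rfl]

lemma resultant_neg_right_of_monic (hf : f.Monic) (g : R[X]) :
    resultant f (-g) = (-1) ^ f.natDegree * resultant f g := by
  rw [← neg_one_mul, ← C_1, ← C_neg, resultant_mul_right_of_monic hf, natDegree_C,
    resultant_C_zero_right]

lemma resultant_X_of_monic (hf : f.Monic) : resultant f X = (-1) ^ f.natDegree * f.coeff 0 := by
  have := resultant_X_sub_C_right f f.natDegree 0 le_rfl
  rwa [C_0, sub_zero, resultant_eq_of_natDegree_le_of_monic hf natDegree_X_le,
    ← coeff_zero_eq_eval_zero] at this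

lemma resultant_map_of_monic (hf : f.Monic) (φ : R →+* S) (g : R[X]) :
    resultant (f.map φ) (g.map φ) = φ (resultant f g) := by
  nontriviality S
  rw [← resultant_eq_of_natDegree_le_of_monic (hf.map φ) natDegree_map_le, hf.natDegree_map,
    resultant_map_map]

lemma discr_eq_resultant_of_monic (hf : f.Monic) :
    f.discr = (-1) ^ (f.natDegree * (f.natDegree - 1) / 2) * resultant f f.derivative := by
  nontriviality R
  rcases f.natDegree.eq_zero_or_pos with h0 | hpos
  · rw [eq_one_of_monic_natDegree_zero hf h0, ← C_1, discr_C]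
    simp
  · rw [← resultant_eq_of_natDegree_le_of_monic hf (natDegree_derivative_le f),
      resultant_deriv (natDegree_pos_iff_degree_pos.mp hpos), hf.leadingCoeff, mul_one, ← mul_assoc,
      ← mul_pow, neg_one_mul, neg_neg, one_pow, one_mul]

lemma discr_map_of_monic (hf : f.Monic) (φ : R →+* S) : (f.map φ).discr = φ f.discr := by
  nontriviality S
  rw [discr_eq_resultant_of_monic (hf.map φ), discr_eq_resultant_of_monic hf, hf.natDegree_map,
    derivative_map, ← hf.natDegree_map φ, resultant_map_of_monic hf, hf.natDegree_map]
  simp only [map_mul, map_pow, map_neg, map_one]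

lemma eval_derivative_prod_X_sub_C {n : ℕ} (r : Fin n → R) (i : Fin n) :
    (∏ j, (X - C (r j))).derivative.eval (r i) = ∏ j ∈ {i}ᶜ, (r i - r j) := by
  rw [derivative_prod_finset, eval_finsetSum, Finset.sum_eq_single_of_mem i (Finset.mem_univ i)]
  · simp [eval_prod, Finset.compl_singleton]
  · intro j _ hj
    rw [eval_mul, eval_prod, Finset.prod_eq_zero (i := i) (by simpa using hj.symm) (by simp),
      zero_mul]

lemma prod_prod_compl_sub_eq_det_vandermonde_sq {n : ℕ} (r : Fin n → R) :
    ∏ i, ∏ j ∈ {i}ᶜ, (r i - r j) =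
      (-1) ^ (n * (n - 1) / 2) * (Matrix.vandermonde r).det ^ 2 := by
  have hpair (i j : Fin n) : (r i - r j) * (r j - r i) = -1 * (r j - r i) ^ 2 := by ring
  rw [← Finset.prod_prod_Ioi_mul_eq_prod_prod_off_diag (fun j i ↦ r i - r j),
    Matrix.det_vandermonde]
  simp only [hpair, Finset.prod_mul_distrib, Finset.prod_pow, Finset.prod_const,
    Finset.prod_pow_eq_pow_sum, Fin.card_Ioi]
  rw [Fin.sum_univ_eq_sum_range (n - 1 - ·), Finset.sum_range_reflect (fun i ↦ i),
    Finset.sum_range_id]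

lemma discr_prod_X_sub_C {n : ℕ} (r : Fin n → R) :
    (∏ i, (X - C (r i))).discr = (Matrix.vandermonde r).det ^ 2 := by
  nontriviality R
  have hmonic : (∏ i, (X - C (r i))).Monic := monic_prod_X_sub_C r Finset.univ
  have hres : resultant (∏ i, (X - C (r i))) (∏ i, (X - C (r i))).derivative =
      ∏ i, ∏ j ∈ {i}ᶜ, (r i - r j) := by
    rw [resultant_prod_left _ _ _ _ (by simp) le_rfl]
    refine Finset.prod_congr rfl fun i _ ↦ ?_
    rw [natDegree_X_sub_C, resultant_X_sub_C_left _ _ _ le_rfl, eval_derivative_prod_X_sub_C]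
  rw [discr_eq_resultant_of_monic hmonic, hres, prod_prod_compl_sub_eq_det_vandermonde_sq,
    natDegree_finsetProd_X_sub_C_eq_card, Finset.card_univ, Fintype.card_fin, ← mul_assoc,
    ← mul_pow, neg_one_mul, neg_neg, one_pow, one_mul]

end Resultant

section

variable (R : Type*) [CommRing R] {n t k : ℕ}

lemma natDegree_X_pow_add_one_pow_le (t k : ℕ) : ((X ^ t + 1 : R[X]) ^ k).natDegree ≤ k * t :=
  natDegree_pow_le_of_le k (by compute_degree)

lemma degree_X_pow_add_one_pow_lt (h : k * t < n) : ((X ^ t + 1 : R[X]) ^ k).degree < n :=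
  degree_le_natDegree.trans_lt (mod_cast (natDegree_X_pow_add_one_pow_le R t k).trans_lt h)

lemma monic_X_pow_add_X_pow_add_one_pow (h : k * t < n) :
    (X ^ n + (X ^ t + 1) ^ k : R[X]).Monic :=
  monic_X_pow_add (degree_X_pow_add_one_pow_lt R h)

lemma natDegree_X_pow_add_X_pow_add_one_pow [Nontrivial R] (h : k * t < n) :
    (X ^ n + (X ^ t + 1) ^ k : R[X]).natDegree = n := by
  refine natDegree_eq_of_degree_eq_some ?_
  rw [degree_add_eq_left_of_degree_lt] <;> rw [degree_X_pow]
  exact degree_X_pow_add_one_pow_lt R h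

lemma X_mul_derivative_X_pow_add_X_pow_add_one_pow (n t : ℕ) (hk : 0 < k) :
    X * derivative (X ^ n + (X ^ t + 1) ^ k : R[X]) =
      -((X ^ t + 1) ^ (k - 1) * (C (n - k * t : R) * X ^ t + C (n : R))) +
        (X ^ n + (X ^ t + 1) ^ k) * C (n : R) := by
  have hX (m : ℕ) : (X : R[X]) * ((m : R[X]) * X ^ (m - 1)) = (m : R[X]) * X ^ m := by
    rcases m with _ | m
    · simp
    · rw [Nat.add_sub_cancel]; ring
  obtain ⟨k, rfl⟩ := Nat.exists_eq_add_of_lt hk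
  simp only [derivative_add, derivative_pow, derivative_X, derivative_one, map_natCast, map_sub,
    map_mul]
  rw [zero_add, Nat.add_sub_cancel]
  push_cast
  linear_combination hX n + (k + 1 : R[X]) * (X ^ t + 1) ^ k * hX t

variable {R}

lemma resultant_X_pow_add_mul_left (B q : R[X]) (h : q.natDegree + B.natDegree ≤ n) :
    resultant (X ^ n + B * q) B n = B.coeff 0 ^ n := by
  rw [resultant_add_mul_left _ _ _ _ _ h le_rfl, resultant_X_pow_left _ _ _ le_rfl]

lemma resultant_X_pow_add_X_pow_add_one_pow_eq_one (ht : 0 < t) (hk : 0 < k) (hn : k * t < n) :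
    resultant (X ^ n + (X ^ t + 1) ^ k : R[X]) (X ^ t + 1) n = 1 := by
  have hdeg : (X ^ t + 1 : R[X]).natDegree ≤ t := by compute_degree
  have hpred : (k - 1) * t + t = k * t := by
    rw [← Nat.succ_mul, Nat.succ_eq_add_one, Nat.sub_add_cancel hk]
  have hsplit : (X ^ t + 1 : R[X]) ^ k = (X ^ t + 1) * (X ^ t + 1) ^ (k - 1) :=
    (mul_pow_sub_one hk.ne' _).symm
  rw [hsplit, resultant_X_pow_add_mul_left]
  · simp [ht.ne]
  · have := natDegree_X_pow_add_one_pow_le R t (k - 1)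
    omega

lemma discr_X_pow_add_X_pow_add_one_pow (ht : 0 < t) (hk : 0 < k) (hn : k * t < n) :
    (X ^ n + (X ^ t + 1) ^ k : R[X]).discr = (-1) ^ (n * (n - 1) / 2) *
      resultant (X ^ n + (X ^ t + 1) ^ k) (C (n - k * t : R) * X ^ t + C (n : R)) n := by
  nontriviality R
  set f : R[X] := X ^ n + (X ^ t + 1) ^ k with hf
  set B : R[X] := C (n - k * t : R) * X ^ t + C (n : R)
  have hmonic : f.Monic := monic_X_pow_add_X_pow_add_one_pow R hn
  have hdeg : f.natDegree = n := natDegree_X_pow_add_X_pow_add_one_pow R hn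
  have hone : resultant f (X ^ t + 1) = 1 := by
    rw [hdeg]
    exact resultant_X_pow_add_X_pow_add_one_pow_eq_one ht hk hn
  have hcoeff : f.coeff 0 = 1 := by
    simp [hf, coeff_zero_eq_eval_zero, ht.ne', (Nat.zero_lt_of_lt hn).ne']
  have hmul : (-1) ^ n * resultant f f.derivative = (-1) ^ n * resultant f B := by
    calc (-1) ^ n * resultant f f.derivative = resultant f (X * f.derivative) := by
          rw [resultant_mul_right_of_monic hmonic, resultant_X_of_monic hmonic, hcoeff, hdeg,
            mul_one]
      _ = resultant f (-((X ^ t + 1) ^ (k - 1) * B)) := by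
          rw [X_mul_derivative_X_pow_add_X_pow_add_one_pow R n t hk,
            resultant_add_mul_right_of_monic hmonic]
      _ = (-1) ^ n * resultant f B := by
          rw [resultant_neg_right_of_monic hmonic, resultant_mul_right_of_monic hmonic,
            resultant_pow_right_of_monic hmonic, hone, one_pow, one_mul, hdeg]
  rw [discr_eq_resultant_of_monic hmonic, (isUnit_one.neg.pow n).mul_left_cancel hmul, hdeg]

lemma X_pow_add_C_dvd_X_pow_add_one_pow (t : ℕ) {c : R} (hc : (1 - c) ^ k = 0) :
    X ^ t + C c ∣ (X ^ t + 1 : R[X]) ^ k := by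
  have hdvd := sub_dvd_pow_sub_pow (X ^ t + 1 : R[X]) (C (1 - c)) k
  have hsub : X ^ t + 1 - C (1 - c) = X ^ t + C c := by
    rw [C_sub, C_1]
    ring
  rwa [hsub, ← C_pow, hc, C_0, sub_zero] at hdvd

lemma resultant_X_pow_add_X_pow_add_one_pow_of_pow_eq_zero (ht : 0 < t) (hn : k * t < n)
    (hunit : IsUnit (n - k * t : R)) (hnil : (k * t : R) ^ k = 0) :
    resultant (X ^ n + (X ^ t + 1) ^ k : R[X]) (C (n - k * t : R) * X ^ t + C (n : R)) n =
      (n : R) ^ n := by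
  nontriviality R
  obtain ⟨u, hu⟩ := hunit.exists_right_inv
  set B : R[X] := X ^ t + C (u * n) with hB
  have hBmonic : B.Monic := monic_X_pow_add_C _ ht.ne'
  obtain ⟨q, hq⟩ : B ∣ (X ^ t + 1) ^ k := by
    refine X_pow_add_C_dvd_X_pow_add_one_pow t ?_
    rw [show 1 - u * n = -u * (k * t) by linear_combination -hu, mul_pow, hnil, mul_zero]
  have hqdeg : q.natDegree + B.natDegree ≤ n := by
    rw [add_comm, ← hBmonic.natDegree_mul', ← hq]
    · exact (natDegree_X_pow_add_one_pow_le R t k).trans hn.le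
    · rintro rfl
      rw [mul_zero] at hq
      have hpow : ((X ^ t + 1 : R[X]) ^ k).Monic := by
        simpa only [C_1] using (monic_X_pow_add_C (1 : R) ht.ne').pow k
      exact hpow.ne_zero hq
  have hfactor : C (n - k * t : R) * X ^ t + C (n : R) = C (n - k * t : R) * B := by
    rw [hB, mul_add, ← C_mul, ← mul_assoc, hu, one_mul]
  have hmonic : (X ^ n + (X ^ t + 1) ^ k : R[X]).Monic := monic_X_pow_add_X_pow_add_one_pow R hn
  have hdeg : (X ^ n + (X ^ t + 1) ^ k : R[X]).natDegree = n :=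
    natDegree_X_pow_add_X_pow_add_one_pow R hn
  have hres : resultant (X ^ n + (X ^ t + 1) ^ k : R[X]) B n = (u * n) ^ n := by
    rw [hq, resultant_X_pow_add_mul_left _ _ hqdeg]
    simp [hB, ht.ne]
  have hmul := resultant_mul_right_of_monic hmonic (C (n - k * t : R)) B
  rw [hdeg, hres, natDegree_C, resultant_C_zero_right] at hmul
  rw [hfactor, hmul, ← mul_pow, ← mul_assoc, hu, one_mul]

end

lemma monic_eq_prod_X_sub_C_of_injective {R : Type*} [CommRing R] [IsDomain R] {f : R[X]}
    (hf : f.Monic) {n : ℕ} (hn : f.natDegree = n) {r : Fin n → R} (hr : Function.Injective r)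
    (hroot : ∀ i, f.IsRoot (r i)) :
    f = ∏ i, (X - C (r i)) := by
  have hmonic : (∏ i, (X - C (r i))).Monic := monic_prod_X_sub_C r Finset.univ
  have hdeg : f.degree = (∏ i, (X - C (r i))).degree := by
    rw [degree_eq_natDegree hf.ne_zero, degree_eq_natDegree hmonic.ne_zero,
      natDegree_finsetProd_X_sub_C_eq_card, Finset.card_univ, Fintype.card_fin, hn]
  refine eq_of_degree_sub_lt_of_eval_index_eq Finset.univ hr.injOn ?_ fun i hi ↦ ?_
  · calc (f - ∏ i, (X - C (r i))).degree < f.degree :=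
          degree_sub_lt_left hdeg hf.ne_zero (hf.leadingCoeff.trans hmonic.leadingCoeff.symm)
      _ = (Finset.univ : Finset (Fin n)).card := by
          rw [degree_eq_natDegree hf.ne_zero, Finset.card_univ, Fintype.card_fin, hn]
  · rw [hroot i, eval_prod, Finset.prod_eq_zero hi (by simp)]

lemma pow_dvd_of_pow_dvd_intCast {R : Type*} [CommRing R] [IsDomain R] {p : ℕ} (hp : p.Prime)
    (hp0 : (p : R) ≠ 0) (hunit : ¬ IsUnit (p : R)) (j : ℕ) {m : ℤ} (h : (p : R) ^ j ∣ m) :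
    (p : ℤ) ^ j ∣ m := by
  induction j generalizing m with
  | zero => simp
  | succ j ih =>
    obtain ⟨m, rfl⟩ : (p : ℤ) ∣ m := by
      by_contra hndvd
      have hcop : IsCoprime (p : ℤ) m :=
        (Nat.prime_iff_prime_int.mp hp).coprime_iff_not_dvd.mpr hndvd
      have hcopR : IsCoprime (p : R) (m : R) := by simpa using hcop.map (Int.castRingHom R)
      exact hunit (hcopR.isUnit_of_dvd' dvd_rfl ((dvd_pow_self _ j.succ_ne_zero).trans h))
    rw [pow_succ'] at h ⊢
    push_cast at h
    exact mul_dvd_mul_left _ (ih ((mul_dvd_mul_iff_left hp0).mp h))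

lemma map_det_vandermonde_iterate {R : Type*} [CommRing R] (σ : R →+* R) {a : R} {n : ℕ}
    (ha : σ^[n] a = a) :
    σ (Matrix.vandermonde fun i : Fin n ↦ σ^[i] a).det =
      (-1) ^ (n - 1) * (Matrix.vandermonde fun i : Fin n ↦ σ^[i] a).det := by
  rcases n with _ | n
  · simp
  have hshift (i : Fin (n + 1)) : σ (σ^[i] a) = σ^[finRotate (n + 1) i] a := by
    rcases Fin.eq_castSucc_or_eq_last i with ⟨j, rfl⟩ | rfl
    · simp [← Function.iterate_succ_apply' σ]
    · simp [← Function.iterate_succ_apply' σ, ha]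
  have hrotate : σ.mapMatrix (Matrix.vandermonde fun i : Fin (n + 1) ↦ σ^[i] a) =
      (Matrix.vandermonde fun i : Fin (n + 1) ↦ σ^[i] a).submatrix (finRotate (n + 1)) id := by
    ext i j
    simp [Matrix.vandermonde_apply, hshift]
  rw [RingHom.map_det, hrotate, Matrix.det_permute, sign_finRotate]
  simp

lemma injective_gen_pow_card_pow {K L : Type*} [Field K] [Fintype K] [Field L] [Finite L]
    [Algebra K L] (pb : PowerBasis K L) :
    Function.Injective fun i : Fin pb.dim ↦ pb.gen ^ Fintype.card K ^ (i : ℕ) := by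
  intro i j hij
  have hpow (i : ℕ) (x : L) : (FiniteField.frobeniusAlgHom K L ^ i) x = x ^ Fintype.card K ^ i := by
    rw [AlgHom.coe_pow, FiniteField.coe_frobeniusAlgHom, pow_iterate]
  have hinj := pow_injOn_Iio_orderOf (x := FiniteField.frobeniusAlgHom K L)
  rw [FiniteField.orderOf_frobeniusAlgHom, pb.finrank] at hinj
  exact Fin.ext (hinj i.2 j.2 (pb.algHom_ext (by simpa only [hpow] using hij)))

section WittVector

variable {p : ℕ} [Fact p.Prime] {L : Type*} [Field L] [CharP L p]

lemma wittVector_coeff_frobenius_iterate (i m : ℕ) (x : WittVector p L) :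
    (WittVector.frobenius^[i] x).coeff m = x.coeff m ^ p ^ i := by
  induction i with
  | zero => simp
  | succ i ih =>
    rw [Function.iterate_succ_apply', WittVector.coeff_frobenius_charP, ih, ← pow_mul, pow_succ]

lemma wittVector_frobenius_iterate_eq_self [Finite L] {n : ℕ} (hcard : Nat.card L = p ^ n)
    (x : WittVector p L) : WittVector.frobenius^[n] x = x := by
  have := Fintype.ofFinite L
  ext m
  rw [wittVector_coeff_frobenius_iterate, ← hcard, Nat.card_eq_fintype_card, FiniteField.pow_card]

variable [PerfectRing L p]

lemma natCast_prime_dvd_sub_iff_coeff_zero_eq {x y : WittVector p L} :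
    (p : WittVector p L) ∣ x - y ↔ x.coeff 0 = y.coeff 0 := by
  rw [← Ideal.mem_span_singleton, ← WittVector.ker_constantCoeff, RingHom.sub_mem_ker_iff]
  rfl

lemma exists_isRoot_wittVector_coeff_zero_eq {f : (WittVector p L)[X]} (hf : f.Monic) {α : L}
    (hα : (f.map WittVector.constantCoeff).IsRoot α)
    (hsimple : (f.map WittVector.constantCoeff).derivative.eval α ≠ 0) :
    ∃ a, f.IsRoot a ∧ a.coeff 0 = α := by
  obtain ⟨b, rfl⟩ := WittVector.constantCoeff_surjective (p := p) α
  rw [derivative_map, eval_map_apply] at hsimple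
  rw [IsRoot, eval_map_apply] at hα
  obtain ⟨a, ha, hab⟩ := HenselianRing.is_henselian (I := Ideal.span {(p : WittVector p L)}) f hf b
    (by rwa [← WittVector.ker_constantCoeff])
    ((MulEquiv.isUnit_map WittVector.quotientPEquiv).mp hsimple.isUnit)
  rw [← WittVector.ker_constantCoeff, RingHom.mem_ker, map_sub, sub_eq_zero] at hab
  exact ⟨a, ha, hab⟩

end WittVector

lemma eight_dvd_sq_sub_one_of_frobenius_eq_self {L : Type*} [Field L] [CharP L 2] [PerfectRing L 2]
    {x : WittVector 2 L} (hx : WittVector.frobenius x = x) (h0 : x.coeff 0 ≠ 0) :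
    (2 : WittVector 2 L) ^ 3 ∣ x ^ 2 - 1 := by
  -- `x = 1 + 2u` with `u` fixed by Frobenius, so `x ^ 2 - 1 = 4 (u ^ 2 + u)` and `2 ∣ u ^ 2 - u`.
  have hsq {y : WittVector 2 L} (hy : WittVector.frobenius y = y) : y.coeff 0 ^ 2 = y.coeff 0 := by
    rw [← WittVector.coeff_frobenius_charP, hy]
  have hx1 : x.coeff 0 = 1 := (mul_eq_left₀ h0).mp (by rw [← sq, hsq hx])
  obtain ⟨u, hu⟩ : ((2 : ℕ) : WittVector 2 L) ∣ x - 1 := by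
    rw [natCast_prime_dvd_sub_iff_coeff_zero_eq, hx1, WittVector.one_coeff_zero]
  have hufix : WittVector.frobenius u = u := by
    have := congrArg WittVector.frobenius hu
    rw [map_sub, map_one, hx, hu, map_mul, map_natCast] at this
    exact (mul_left_cancel₀ (WittVector.p_nonzero 2 L) this).symm
  obtain ⟨w, hw⟩ : ((2 : ℕ) : WittVector 2 L) ∣ u ^ 2 - u := by
    rw [natCast_prime_dvd_sub_iff_coeff_zero_eq, sq, WittVector.mul_coeff_zero, ← sq, hsq hufix]
  push_cast at hu hw
  exact ⟨u + w, by linear_combination (x + 1 + 2 * u) * hu + 4 * hw⟩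

lemma exists_map_eq_prod_X_sub_C_frobenius_iterate {p : ℕ} [Fact p.Prime] {L : Type*} [Field L]
    [CharP L p] [Finite L] [Algebra (ZMod p) L] (pb : PowerBasis (ZMod p) L)
    {F : ℤ[X]} (hF : F.Monic) (hmin : F.map (Int.castRingHom (ZMod p)) = minpoly (ZMod p) pb.gen) :
    ∃ a : WittVector p L, a.coeff 0 = pb.gen ∧
      F.map (Int.castRingHom _) = ∏ i : Fin pb.dim, (X - C (WittVector.frobenius^[i] a)) := by
  set Fw : (WittVector p L)[X] := F.map (Int.castRingHom _) with hFw
  have hred : Fw.map WittVector.constantCoeff =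
      (minpoly (ZMod p) pb.gen).map (algebraMap (ZMod p) L) := by
    rw [← hmin, hFw, map_map, map_map]
    exact congrArg F.map (RingHom.ext_int _ _)
  have hsep : (minpoly (ZMod p) pb.gen).Separable :=
    PerfectField.separable_of_irreducible (minpoly.irreducible pb.isIntegral_gen)
  have hmonic : Fw.Monic := hF.map _
  have hdeg : Fw.natDegree = pb.dim := by
    rw [← pb.natDegree_minpoly, ← hmin, hFw, hF.natDegree_map, hF.natDegree_map]
  obtain ⟨a, ha, ha0⟩ := exists_isRoot_wittVector_coeff_zero_eq (α := pb.gen) hmonic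
    (by rw [hred, IsRoot, eval_map_algebraMap, minpoly.aeval])
    (by
      rw [hred, derivative_map, eval_map_algebraMap]
      exact hsep.aeval_derivative_ne_zero (minpoly.aeval _ _))
  have hroot (i : ℕ) : Fw.IsRoot (WittVector.frobenius^[i] a) := by
    induction i with
    | zero => exact ha
    | succ i ih =>
      rw [Function.iterate_succ_apply']
      simpa [hFw, map_map, RingHom.ext_int _ (Int.castRingHom _)] using
        ih.map (f := WittVector.frobenius)
  refine ⟨a, ha0, monic_eq_prod_X_sub_C_of_injective hmonic hdeg (fun i j hij ↦ ?_)
    fun i ↦ hroot i⟩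
  refine injective_gen_pow_card_pow pb ?_
  simpa only [wittVector_coeff_frobenius_iterate, ha0, ZMod.card] using
    congrArg (WittVector.coeff · 0) hij

lemma eight_dvd_discr_sub_one_of_map_eq_minpoly {L : Type*} [Field L] [CharP L 2] [Finite L]
    [Algebra (ZMod 2) L] (pb : PowerBasis (ZMod 2) L) (hodd : Odd pb.dim) {F : ℤ[X]} (hF : F.Monic)
    (hmin : F.map (Int.castRingHom (ZMod 2)) = minpoly (ZMod 2) pb.gen) :
    (2 : WittVector 2 L) ^ 3 ∣ (F.discr - 1 : ℤ) := by
  obtain ⟨a, ha, hprod⟩ := exists_map_eq_prod_X_sub_C_frobenius_iterate pb hF hmin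
  set V := (Matrix.vandermonde fun i : Fin pb.dim ↦ WittVector.frobenius^[i] a).det with hV
  have hdiscr : (F.discr : WittVector 2 L) = V ^ 2 := by
    rw [← eq_intCast (Int.castRingHom (WittVector 2 L)), ← discr_map_of_monic hF, hprod,
      discr_prod_X_sub_C]
  have hfix : WittVector.frobenius V = V := by
    have hcard : Nat.card L = 2 ^ pb.dim := by
      rw [Module.natCard_eq_pow_finrank (K := ZMod 2), Nat.card_zmod, pb.finrank]
    rw [hV, map_det_vandermonde_iterate _ (wittVector_frobenius_iterate_eq_self hcard a),
      (Nat.Odd.sub_odd hodd odd_one).neg_one_pow, one_mul]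
  have hV0 : V.coeff 0 ≠ 0 := by
    have hred : V.coeff 0 = (Matrix.vandermonde fun i : Fin pb.dim ↦ pb.gen ^ 2 ^ (i : ℕ)).det := by
      rw [← WittVector.constantCoeff_apply, hV, RingHom.map_det]
      congr 1
      ext i j
      rw [RingHom.mapMatrix_apply, Matrix.map_apply, Matrix.vandermonde_apply,
        Matrix.vandermonde_apply, map_pow, WittVector.constantCoeff_apply,
        wittVector_coeff_frobenius_iterate, ha]
    rw [hred, Matrix.det_vandermonde_ne_zero_iff]
    simpa only [ZMod.card] using injective_gen_pow_card_pow pb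
  rw [Int.cast_sub, Int.cast_one, hdiscr]
  exact eight_dvd_sq_sub_one_of_frobenius_eq_self hfix hV0

theorem discr_zmod_eight_eq_one_of_irreducible_map {F : ℤ[X]} (hF : F.Monic)
    (hodd : Odd F.natDegree) (hirr : Irreducible (F.map (Int.castRingHom (ZMod 2)))) :
    (F.discr : ZMod 8) = 1 := by
  set f : (ZMod 2)[X] := F.map (Int.castRingHom (ZMod 2))
  have := Fact.mk hirr
  let L := AdjoinRoot f
  let pb : PowerBasis (ZMod 2) L := AdjoinRoot.powerBasis hirr.ne_zero
  have := charP_of_injective_algebraMap (algebraMap (ZMod 2) L).injective 2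
  have := Module.Finite.of_basis pb.basis
  have : Finite L := Module.finite_of_finite (ZMod 2)
  have hdim : pb.dim = F.natDegree := hF.natDegree_map _
  have hmin : f = minpoly (ZMod 2) pb.gen :=
    (AdjoinRoot.minpoly_powerBasis_gen_of_monic (hF.map _)).symm
  have hdvd : (2 : WittVector 2 L) ^ 3 ∣ (F.discr - 1 : ℤ) :=
    eight_dvd_discr_sub_one_of_map_eq_minpoly pb (hdim ▸ hodd) hF hmin
  have h8 : ((2 : ℕ) : ℤ) ^ 3 ∣ F.discr - 1 :=
    pow_dvd_of_pow_dvd_intCast Nat.prime_two (WittVector.p_nonzero 2 L)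
      (WittVector.irreducible 2).not_isUnit 3 hdvd
  rw [← sub_eq_zero, ← Int.cast_one, ← Int.cast_sub, ZMod.intCast_zmod_eq_zero_iff_dvd]
  exact h8

lemma natCast_zmod_eight_sq_eq_one_of_odd {n : ℕ} (hn : Odd n) : (n : ZMod 8) ^ 2 = 1 := by
  obtain ⟨m, rfl⟩ := hn
  obtain ⟨q, hq⟩ := Nat.even_mul_succ_self m
  have h8 : (8 : ZMod 8) = 0 := rfl
  have hqR : (m * (m + 1) : ZMod 8) = q + q := mod_cast congrArg (Nat.cast : ℕ → ZMod 8) hq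
  push_cast
  linear_combination 4 * hqR + q * h8

lemma neg_one_pow_mul_natCast_zmod_eight_eq_five {n : ℕ} (h : n % 8 = 3 ∨ n % 8 = 5) :
    (-1) ^ (n * (n - 1) / 2) * (n : ZMod 8) = 5 := by
  have h8 : (8 : ZMod 8) = 0 := rfl
  obtain ⟨m, rfl⟩ : Odd n := Nat.odd_iff.mpr (by omega)
  have hexp : (2 * m + 1) * (2 * m + 1 - 1) / 2 = (2 * m + 1) * m := by
    rw [Nat.add_sub_cancel, mul_left_comm, Nat.mul_div_cancel_left _ two_pos]
  rw [hexp, pow_mul, (odd_two_mul_add_one m).neg_one_pow]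
  rcases h with h | h
  · obtain ⟨q, rfl⟩ : ∃ q, m = 2 * (2 * q) + 1 := ⟨m / 4, by omega⟩
    rw [(odd_two_mul_add_one _).neg_one_pow]
    push_cast
    linear_combination (-q - 1) * h8
  · obtain ⟨q, rfl⟩ : ∃ q, m = 2 * (2 * q + 1) := ⟨m / 4, by omega⟩
    rw [(even_two_mul _).neg_one_pow]
    push_cast
    linear_combination q * h8

lemma discr_X_pow_add_X_pow_add_one_pow_six_zmod_eight {n t : ℕ} (ht : 0 < t) (hn : 6 * t < n)
    (hodd : Odd n) :
    (X ^ n + (X ^ t + 1) ^ 6 : (ZMod 8)[X]).discr = (-1) ^ (n * (n - 1) / 2) * n := by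
  have hunit : IsUnit (n - (6 : ℕ) * t : ZMod 8) := by
    have hdiff : Odd (n - 6 * t) := Nat.Odd.sub_even hn.le hodd (by simp [parity_simps])
    rw [← Nat.cast_mul, ← Nat.cast_sub hn.le]
    exact .of_pow_eq_one (natCast_zmod_eight_sq_eq_one_of_odd hdiff) two_ne_zero
  have hnil : ((6 : ℕ) * t : ZMod 8) ^ 6 = 0 := by
    rw [mul_pow, show ((6 : ℕ) : ZMod 8) ^ 6 = 0 from rfl, zero_mul]
  have hpow : (n : ZMod 8) ^ n = n := by
    obtain ⟨m, hm⟩ := hodd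
    nth_rw 2 [hm]
    rw [pow_succ, pow_mul, natCast_zmod_eight_sq_eq_one_of_odd ⟨m, hm⟩, one_pow, one_mul]
  rw [discr_X_pow_add_X_pow_add_one_pow ht (by norm_num) hn,
    resultant_X_pow_add_X_pow_add_one_pow_of_pow_eq_zero ht hn hunit hnil, hpow]

theorem not_irreducible_X_pow_add_X_pow_add_one_pow_six {n t : ℕ} (ht : 0 < t) (hn : 6 * t < n)
    (h : n % 8 = 3 ∨ n % 8 = 5) : ¬ Irreducible (X ^ n + (X ^ t + 1) ^ 6 : (ZMod 2)[X]) := by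
  intro hirr
  have hodd : Odd n := Nat.odd_iff.mpr (by omega)
  set F : ℤ[X] := X ^ n + (X ^ t + 1) ^ 6 with hF
  have hmonic : F.Monic := monic_X_pow_add_X_pow_add_one_pow ℤ hn
  have hmap (m : ℕ) : F.map (Int.castRingHom (ZMod m)) = X ^ n + (X ^ t + 1) ^ 6 := by simp [hF]
  have hone : (F.discr : ZMod 8) = 1 := by
    refine discr_zmod_eight_eq_one_of_irreducible_map hmonic ?_ (by rwa [hmap])
    rwa [hF, natDegree_X_pow_add_X_pow_add_one_pow ℤ hn]
  have hfive : (F.discr : ZMod 8) = 5 := by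
    rw [← eq_intCast (Int.castRingHom (ZMod 8)), ← discr_map_of_monic hmonic, hmap,
      discr_X_pow_add_X_pow_add_one_pow_six_zmod_eight ht hn hodd,
      neg_one_pow_mul_natCast_zmod_eight_eq_five h]
  exact absurd (hone.symm.trans hfive) (by decide)

lemma not_irreducible_expand_zmod {p : ℕ} [Fact p.Prime] (f : (ZMod p)[X]) :
    ¬ Irreducible (expand (ZMod p) p f) := by
  rw [ZMod.expand_card]
  exact not_irreducible_pow (Fact.out : p.Prime).ne_one

theorem not_irreducible_X_pow_add_X_pow_three_mul_add_of_even {s n : ℕ} (hs : Even s) (hs0 : 0 < s)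
    (hn : 3 * s < n) (h1 : n % 8 ≠ 1) (h7 : n % 8 ≠ 7) :
    ¬ Irreducible (X ^ n + X ^ (3 * s) + X ^ (2 * s) + X ^ s + 1 : (ZMod 2)[X]) := by
  obtain ⟨t, rfl⟩ := hs
  rcases Nat.even_or_odd n with ⟨m, rfl⟩ | hodd
  · have hexpand :
        (X ^ (m + m) + X ^ (3 * (t + t)) + X ^ (2 * (t + t)) + X ^ (t + t) + 1 : (ZMod 2)[X]) =
          expand (ZMod 2) 2 (X ^ m + X ^ (3 * t) + X ^ (2 * t) + X ^ t + 1) := by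
      simp only [map_add, map_pow, map_one, expand_X]
      ring
    rw [hexpand]
    exact not_irreducible_expand_zmod _
  · have hcube : (X ^ n + X ^ (3 * (t + t)) + X ^ (2 * (t + t)) + X ^ (t + t) + 1 : (ZMod 2)[X]) =
        X ^ n + (X ^ t + 1) ^ 6 := by
      have htwo : (2 : (ZMod 2)[X]) = 0 := CharTwo.two_eq_zero
      have hsq : (X ^ t + 1 : (ZMod 2)[X]) ^ 2 = X ^ (t + t) + 1 := by
        rw [CharTwo.add_sq, one_pow, ← pow_mul, mul_two]
      linear_combination (-X ^ (2 * t) - X ^ (4 * t)) * htwo - ((X ^ t + 1) ^ 4 +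
        (X ^ t + 1) ^ 2 * (X ^ (t + t) + 1) + (X ^ (t + t) + 1) ^ 2) * hsq
    rw [hcube]
    exact not_irreducible_X_pow_add_X_pow_add_one_pow_six (by omega) (by omega)
      (by rw [Nat.odd_iff] at hodd; omega)

section Mirror

/-- The mirror operation as a multiplicative equivalence, used to carry irreducibility from a
polynomial to its mirror. -/
noncomputable def mirrorMulEquiv (R : Type*) [Ring R] [NoZeroDivisors R] : R[X] ≃* R[X] where
  toFun := mirror
  invFun := mirror
  left_inv := mirror_mirror
  right_inv := mirror_mirror
  map_mul' f g := mirror_mul_of_domain f g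

lemma irreducible_mirror_iff {R : Type*} [Ring R] [NoZeroDivisors R] {f : R[X]} :
    Irreducible f.mirror ↔ Irreducible f :=
  MulEquiv.irreducible_iff (mirrorMulEquiv R)

lemma mirror_eq_reflect {R : Type*} [Semiring R] {f : R[X]} (hf : f.coeff 0 ≠ 0) :
    f.mirror = reflect f.natDegree f := by
  rw [mirror, natTrailingDegree_eq_zero.mpr (Or.inr hf), pow_zero, mul_one, reverse]

lemma mirror_X_pow_add_X_pow_add_X_pow_add_X_pow_add_one {R : Type*} [Semiring R] [Nontrivial R]
    {n a b c : ℕ} (ha : a < n) (ha0 : 0 < a) (hb : b < n) (hb0 : 0 < b) (hc : c < n) (hc0 : 0 < c) :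
    (X ^ n + X ^ a + X ^ b + X ^ c + 1 : R[X]).mirror =
      X ^ n + X ^ (n - c) + X ^ (n - b) + X ^ (n - a) + 1 := by
  have hn0 : 0 < n := by omega
  have hcoeff : (X ^ n + X ^ a + X ^ b + X ^ c + 1 : R[X]).coeff 0 = 1 := by
    simp [coeff_X_pow, hn0.ne, ha0.ne, hb0.ne, hc0.ne]
  have hdeg : (X ^ n + X ^ a + X ^ b + X ^ c + 1 : R[X]).natDegree = n := by
    refine natDegree_eq_of_le_of_coeff_ne_zero (by compute_degree; omega) ?_
    simp [coeff_X_pow, coeff_one, ha.ne', hb.ne', hc.ne', hn0.ne']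
  rw [mirror_eq_reflect (hcoeff.trans_ne one_ne_zero), hdeg]
  simp only [reflect_add, reflect_monomial, reflect_one, revAt_le le_rfl, revAt_le ha.le,
    revAt_le hb.le, revAt_le hc.le, Nat.sub_self, pow_zero]
  abel

end Mirror

theorem class2_pentanomial_reducible (s n : ℕ) (hs : Even s) (hs0 : 0 < s)
    (hn : 3 * s < n) (h1 : n % 8 ≠ 1) (h7 : n % 8 ≠ 7) :
    ¬ Irreducible (X ^ n + X ^ (n - s) + X ^ (n - 2 * s) + X ^ (n - 3 * s) + 1 :
        Polynomial (ZMod 2)) ∧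
    ¬ Irreducible (X ^ n + X ^ (3 * s) + X ^ (2 * s) + X ^ s + 1 :
        Polynomial (ZMod 2)) := by
  have hg := not_irreducible_X_pow_add_X_pow_three_mul_add_of_even hs hs0 hn h1 h7
  refine ⟨?_, hg⟩
  rwa [← irreducible_mirror_iff, mirror_X_pow_add_X_pow_add_X_pow_add_X_pow_add_one hn (by omega)
    (by omega) (by omega) (by omega) hs0] at hg
end

section
/- Let f ∈ F_2[X] be a squarefree polynomial of degree n ≥ 1, let F ∈ ℤ[X] be any monic polynomial of degree n whose reduction modulo 2 is f, and let D(F) = ∏_{1 ≤ i < j ≤ n} (α_i − α_j)^2 ∈ ℤ be the discriminant of F, where α_1, ..., α_n ∈ ℂ are the roots of F counted with multiplicity. Let t_f denote the number of irreducible factors of f in F_2[X]. Then t_f ≡ n (mod 2) if and only if D(F) ≡ 1 (mod 8). -/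
open Polynomial Finset

/-!
The Vandermonde determinant of the roots of `F` is a difference `A - B`, where `A` and `B` collect
the terms of the Leibniz expansion coming from the even and the odd permutations. Permuting the
roots fixes or exchanges `A` and `B`, so `s = A + B` and `q = A * B` are integer polynomials in the
coefficients of `F`, and `D(F) = (A - B) ^ 2 = s ^ 2 - 4 * q`. Modulo `2` the same expressions can
be evaluated at the roots of `f` in a splitting field. There Frobenius acts on the roots by a
permutation `σ`, and it fixes `A` and `B` if `σ` is even and exchanges them if `σ` is odd. In both
cases `s = A - B` is a nonzero element of `𝔽₂`, so `s` is odd and `D(F) ≡ 1 (mod 8)` means that `q`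
is even. If `σ` is even, then `A` and `B` are elements of `𝔽₂` with sum `1`, so `A * B = 0`; if `σ`
is odd, they are conjugate and different, so neither is zero. Finally, the cycles of `σ` are the
sets of roots of the irreducible factors of `f`, so `σ` has sign `(-1) ^ (n - t_f)`.
-/

section DetPart

variable {m R S : Type*} [Fintype m] [DecidableEq m] [CommRing R] [CommRing S]

/-- The part of the Leibniz expansion of `det M` coming from the permutations of sign `ε`, taken
without that sign. -/
def detPart (ε : ℤˣ) (M : Matrix m m R) : R :=
  ∑ σ : Equiv.Perm m with σ.sign = ε, ∏ i, M (σ i) i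

theorem det_eq_detPart_sub_detPart (M : Matrix m m R) :
    M.det = detPart 1 M - detPart (-1) M := by
  have hneg (σ : Equiv.Perm m) : σ.sign = -1 ↔ ¬ σ.sign = 1 := Int.units_ne_iff_eq_neg.symm
  simp only [detPart, hneg]
  rw [Matrix.det_apply, ← sum_filter_add_sum_filter_not _ (fun σ ↦ σ.sign = 1), sub_eq_add_neg,
    ← sum_neg_distrib]
  congr 1 <;> refine sum_congr rfl fun σ hσ ↦ ?_
  · simp [(mem_filter.1 hσ).2]
  · simp [(hneg σ).2 (mem_filter.1 hσ).2]

theorem detPart_submatrix (ε : ℤˣ) (τ : Equiv.Perm m) (M : Matrix m m R) :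
    detPart ε (M.submatrix τ id) = detPart (τ.sign * ε) M :=
  sum_equiv (Equiv.mulLeft τ) (by simp) (by simp)

theorem map_detPart (φ : R →+* S) (ε : ℤˣ) (M : Matrix m m R) :
    φ (detPart ε M) = detPart ε (M.map φ) := by
  simp [detPart]

variable [IsDomain R] [CharP R 2] {M : Matrix m m R} {σ : Equiv.Perm m}

theorem det_eq_one_of_map_frobenius_eq_submatrix (hM : M.det ≠ 0)
    (hσ : M.map (frobenius R 2) = M.submatrix σ id) : M.det = 1 := by
  have hsq : M.det ^ 2 = M.det := by
    rw [← frobenius_def, RingHom.map_det, RingHom.mapMatrix_apply, hσ, Matrix.det_permute]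
    obtain h | h := Int.units_eq_one_or σ.sign <;> simp [h, CharTwo.neg_eq]
  exact (mul_eq_left₀ hM).1 (by rw [← sq, hsq])

theorem detPart_one_mul_detPart_neg_one_eq_zero_iff (hM : M.det ≠ 0)
    (hσ : M.map (frobenius R 2) = M.submatrix σ id) :
    detPart 1 M * detPart (-1) M = 0 ↔ σ.sign = 1 := by
  have hdet : detPart 1 M - detPart (-1) M = 1 := by
    rw [← det_eq_detPart_sub_detPart, det_eq_one_of_map_frobenius_eq_submatrix hM hσ]
  have hsq : detPart 1 M ^ 2 = detPart σ.sign M := by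
    rw [← mul_one σ.sign, ← detPart_submatrix, ← hσ, ← map_detPart, frobenius_def]
  have hmul : detPart 1 M * detPart (-1) M = detPart σ.sign M - detPart 1 M := by
    linear_combination hsq - detPart 1 M * hdet
  rw [hmul, sub_eq_zero]
  refine ⟨fun h ↦ ?_, fun h ↦ by rw [h]⟩
  refine (Int.units_eq_one_or σ.sign).resolve_right fun hodd ↦ one_ne_zero (α := R) ?_
  rw [← hdet, ← h, hodd, sub_self]

end DetPart

section SymmetricEval

open MvPolynomial (symmetricSubalgebra esymm esymmAlgEquiv)

variable {n : ℕ} {R S : Type*} [CommRing R] [CommRing S] [Algebra R S]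

/-- The value of a symmetric polynomial in `n` variables at the roots of the monic polynomial `F` of
degree `n`, computed from the coefficients of `F` by substituting `(-1) ^ k * F.coeff (n - k)` for
the `k`-th elementary symmetric polynomial. -/
noncomputable def symmetricEval (n : ℕ) (F : R[X]) : symmetricSubalgebra (Fin n) R →ₐ[R] R :=
  (MvPolynomial.aeval fun i : Fin n ↦ (-1) ^ (i + 1 : ℕ) * F.coeff (n - (i + 1))).comp
    (esymmAlgEquiv (Fin n) R (Fintype.card_fin n)).symm.toAlgHom

theorem aeval_esymm_eq_coeff {F : R[X]} {a : Fin n → S}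
    (hF : F.map (algebraMap R S) = ∏ i, (X - C (a i))) {k : ℕ} (hk : k ≤ n) :
    MvPolynomial.aeval a (esymm (Fin n) R k) = algebraMap R S ((-1) ^ k * F.coeff (n - k)) := by
  have hcoeff := Multiset.prod_X_sub_C_coeff (univ.val.map a) (k := n - k) (by simp)
  rw [Multiset.map_map] at hcoeff
  change (∏ i, (X - C (a i))).coeff _ = _ at hcoeff
  rw [← hF, coeff_map, Multiset.card_map, card_val, card_univ, Fintype.card_fin,
    Nat.sub_sub_self hk] at hcoeff
  rw [MvPolynomial.aeval_esymm_eq_multiset_esymm, map_mul, hcoeff, ← mul_assoc]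
  simp [← mul_pow]

theorem algebraMap_symmetricEval {F : R[X]} {a : Fin n → S}
    (hF : F.map (algebraMap R S) = ∏ i, (X - C (a i))) (p : symmetricSubalgebra (Fin n) R) :
    algebraMap R S (symmetricEval n F p) =
      MvPolynomial.aeval a (p : MvPolynomial (Fin n) R) := by
  obtain ⟨q, rfl⟩ := (esymmAlgEquiv (Fin n) R (Fintype.card_fin n)).surjective p
  have hcomp : (Algebra.ofId R S).comp
        (MvPolynomial.aeval fun i : Fin n ↦ (-1) ^ (i + 1 : ℕ) * F.coeff (n - (i + 1))) =
      (MvPolynomial.aeval a).comp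
        (MvPolynomial.aeval fun i : Fin n ↦ esymm (Fin n) R (i + 1)) := by
    refine MvPolynomial.algHom_ext fun i ↦ ?_
    simpa [Algebra.ofId_apply] using (aeval_esymm_eq_coeff hF i.isLt).symm
  have hq : symmetricEval n F (esymmAlgEquiv (Fin n) R (Fintype.card_fin n) q) =
      MvPolynomial.aeval (fun i : Fin n ↦ (-1) ^ (i + 1 : ℕ) * F.coeff (n - (i + 1))) q :=
    congrArg (MvPolynomial.aeval _)
      ((esymmAlgEquiv (Fin n) R (Fintype.card_fin n)).symm_apply_apply q)
  have hcoe : (esymmAlgEquiv (Fin n) R (Fintype.card_fin n) q : MvPolynomial (Fin n) R) =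
      MvPolynomial.aeval (fun i : Fin n ↦ esymm (Fin n) R (i + 1)) q :=
    MvPolynomial.esymmAlgHom_apply q
  rw [hq, hcoe]
  exact DFunLike.congr_fun hcomp q

end SymmetricEval

section Resolvent

open MvPolynomial (rename symmetricSubalgebra)
open Matrix (vandermonde)

variable {R S : Type*} [CommRing R] [CommRing S] [Algebra R S] {n : ℕ}

theorem rename_detPart_vandermonde_X (ε : ℤˣ) (τ : Equiv.Perm (Fin n)) :
    rename τ (detPart ε (vandermonde (MvPolynomial.X : Fin n → MvPolynomial (Fin n) R))) =
      detPart (τ.sign * ε) (vandermonde MvPolynomial.X) := by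
  rw [← detPart_submatrix, ← AlgHom.coe_toRingHom, map_detPart]
  congr 1
  ext1 i j
  simp [Matrix.vandermonde_apply]

theorem aeval_detPart_vandermonde_X (ε : ℤˣ) (a : Fin n → S) :
    MvPolynomial.aeval a (detPart ε (vandermonde (MvPolynomial.X (R := R)))) =
      detPart ε (vandermonde a) := by
  rw [← AlgHom.coe_toRingHom, map_detPart]
  congr 1
  ext1 i j
  simp [Matrix.vandermonde_apply]

/-- The trace `A + B` of the quadratic resolvent `(X - A) * (X - B)` of the monic polynomial `F` of
degree `n`, where `A` and `B` are the two halves `detPart 1` and `detPart (-1)` of the Vandermonde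
determinant of the roots of `F`. -/
noncomputable def resolventTrace (n : ℕ) (F : R[X]) : R :=
  symmetricEval n F ⟨detPart 1 (vandermonde MvPolynomial.X) +
      detPart (-1) (vandermonde MvPolynomial.X), fun τ ↦ by
    rw [map_add, rename_detPart_vandermonde_X, rename_detPart_vandermonde_X]
    obtain h | h := Int.units_eq_one_or τ.sign <;> simp [h, add_comm]⟩

/-- The norm `A * B` of the quadratic resolvent `(X - A) * (X - B)` whose trace is
`resolventTrace n F`. -/
noncomputable def resolventNorm (n : ℕ) (F : R[X]) : R :=
  symmetricEval n F ⟨detPart 1 (vandermonde MvPolynomial.X) *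
      detPart (-1) (vandermonde MvPolynomial.X), fun τ ↦ by
    rw [map_mul, rename_detPart_vandermonde_X, rename_detPart_vandermonde_X]
    obtain h | h := Int.units_eq_one_or τ.sign <;> simp [h, mul_comm]⟩

variable {F : R[X]} {a : Fin n → S} {σ : Equiv.Perm (Fin n)}

theorem algebraMap_resolventTrace (hF : F.map (algebraMap R S) = ∏ i, (X - C (a i))) :
    algebraMap R S (resolventTrace n F) =
      detPart 1 (vandermonde a) + detPart (-1) (vandermonde a) := by
  rw [resolventTrace, algebraMap_symmetricEval hF, map_add, aeval_detPart_vandermonde_X,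
    aeval_detPart_vandermonde_X]

theorem algebraMap_resolventNorm (hF : F.map (algebraMap R S) = ∏ i, (X - C (a i))) :
    algebraMap R S (resolventNorm n F) =
      detPart 1 (vandermonde a) * detPart (-1) (vandermonde a) := by
  rw [resolventNorm, algebraMap_symmetricEval hF, map_mul, aeval_detPart_vandermonde_X,
    aeval_detPart_vandermonde_X]

theorem prod_sub_sq_eq_algebraMap_resolvent (hF : F.map (algebraMap R S) = ∏ i, (X - C (a i))) :
    ∏ i, ∏ j ∈ Ioi i, (a i - a j) ^ 2 =
      algebraMap R S (resolventTrace n F ^ 2 - 4 * resolventNorm n F) := by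
  have hdet : ∏ i, ∏ j ∈ Ioi i, (a i - a j) ^ 2 = (vandermonde a).det ^ 2 := by
    simp_rw [Matrix.det_vandermonde, ← prod_pow, sub_sq_comm]
  rw [hdet, det_eq_detPart_sub_detPart, map_sub, map_mul, map_pow, map_ofNat,
    algebraMap_resolventTrace hF, algebraMap_resolventNorm hF]
  ring

theorem vandermonde_map_frobenius (p : ℕ) [ExpChar S p] (hσ : ∀ i, a (σ i) = a i ^ p) :
    (vandermonde a).map (frobenius S p) = (vandermonde a).submatrix σ id := by
  ext i j
  simp [Matrix.vandermonde_apply, frobenius_def, hσ, ← pow_mul, mul_comm]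

variable [IsDomain S] [CharP S 2]

theorem algebraMap_resolventTrace_eq_one (hF : F.map (algebraMap R S) = ∏ i, (X - C (a i)))
    (ha : Function.Injective a) (hσ : ∀ i, a (σ i) = a i ^ 2) :
    algebraMap R S (resolventTrace n F) = 1 := by
  rw [algebraMap_resolventTrace hF, ← CharTwo.sub_eq_add, ← det_eq_detPart_sub_detPart]
  exact det_eq_one_of_map_frobenius_eq_submatrix (Matrix.det_vandermonde_ne_zero_iff.2 ha)
    (vandermonde_map_frobenius 2 hσ)

theorem algebraMap_resolventNorm_eq_zero_iff (hF : F.map (algebraMap R S) = ∏ i, (X - C (a i)))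
    (ha : Function.Injective a) (hσ : ∀ i, a (σ i) = a i ^ 2) :
    algebraMap R S (resolventNorm n F) = 0 ↔ σ.sign = 1 := by
  rw [algebraMap_resolventNorm hF]
  exact detPart_one_mul_detPart_neg_one_eq_zero_iff (Matrix.det_vandermonde_ne_zero_iff.2 ha)
    (vandermonde_map_frobenius 2 hσ)

end Resolvent

section CycleCount

variable {α : Type*} [Fintype α] [DecidableEq α]

theorem image_cycleOf_support (σ : Equiv.Perm α) :
    σ.support.image σ.cycleOf = σ.cycleFactorsFinset := by
  ext g
  rw [mem_image]
  constructor
  · rintro ⟨x, hx, rfl⟩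
    exact Equiv.Perm.cycleOf_mem_cycleFactorsFinset_iff.2 hx
  · intro hg
    obtain ⟨x, hx⟩ := (Equiv.Perm.mem_cycleFactorsFinset_iff.1 hg).1.nonempty_support
    exact ⟨x, Equiv.Perm.mem_cycleFactorsFinset_support_le hg hx,
      (Equiv.Perm.cycle_is_cycleOf hx hg).symm⟩

theorem card_quotient_sameCycle (σ : Equiv.Perm α) :
    Nat.card (Quotient (Equiv.Perm.SameCycle.setoid σ)) =
      σ.cycleType.card + #σ.supportᶜ := by
  -- `cycleOf` is the identity at every fixed point, so it does not separate the trivial cycles.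
  let c : α → Equiv.Perm α ⊕ α := fun x ↦ if σ x = x then .inr x else .inl (σ.cycleOf x)
  have hker : Equiv.Perm.SameCycle.setoid σ = Setoid.ker c := by
    ext x y
    change σ.SameCycle x y ↔ c x = c y
    refine ⟨fun h ↦ ?_, fun h ↦ ?_⟩
    · by_cases hx : σ x = x
      · rw [h.eq_of_left hx]
      · simp [c, hx, mt h.apply_eq_self_iff.2 hx, h.cycleOf_eq]
    · by_cases hx : σ x = x <;> by_cases hy : σ y = y <;>
        simp only [c, hx, hy, if_true, if_false, reduceCtorEq, Sum.inr.injEq, Sum.inl.injEq] at h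
      · rw [h]
      · exact (Equiv.Perm.sameCycle_iff_cycleOf_eq_of_mem_support (Equiv.Perm.mem_support.2 hx)
          (Equiv.Perm.mem_support.2 hy)).2 h
  have himage : univ.image c = σ.cycleFactorsFinset.disjSum σ.supportᶜ := by
    ext (g | x)
    · simp [c, ← image_cycleOf_support, ite_eq_iff]
    · simp [c, ite_eq_iff]
  rw [hker, Nat.card_congr (Setoid.quotientKerEquivRange c), ← Set.image_univ, ← coe_univ,
    ← coe_image, himage]
  simp [Equiv.Perm.cycleType_def]

theorem sign_eq_neg_one_pow_card_add_card_quotient (σ : Equiv.Perm α) :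
    σ.sign = (-1) ^ (Fintype.card α + Nat.card (Quotient (Equiv.Perm.SameCycle.setoid σ))) := by
  rw [card_quotient_sameCycle, Equiv.Perm.sign_of_cycleType, Equiv.Perm.sum_cycleType,
    ← card_add_card_compl σ.support, neg_one_pow_congr]
  simp only [Nat.even_add]
  tauto

end CycleCount

section SplitPolynomial

open UniqueFactorizationMonoid

theorem exists_fin_prod_X_sub_C {R : Type*} [CommRing R] [IsDomain R] {g : R[X]} (hg : g.Splits)
    (hmonic : g.Monic) : ∃ a : Fin g.natDegree → R, g = ∏ i, (X - C (a i)) := by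
  rw [hg.natDegree_eq_card_roots, ← Multiset.length_toList]
  refine ⟨fun i ↦ g.roots.toList[i],
    .trans ?_ (Fin.prod_univ_fun_getElem g.roots.toList fun r ↦ X - C r).symm⟩
  rw [← Multiset.prod_coe, ← Multiset.map_coe, Multiset.coe_toList,
    ← hg.eq_prod_roots_of_monic hmonic]

section IsDomain

variable {ι R S : Type*} [Fintype ι] [CommRing R] [CommRing S] [IsDomain S] [Algebra R S]
  {f : R[X]} {a : ι → S}

theorem aeval_eq_zero_iff_mem_range (hf : f.map (algebraMap R S) = ∏ i, (X - C (a i))) {x : S} :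
    aeval x f = 0 ↔ x ∈ Set.range a := by
  rw [← eval_map_algebraMap, hf, eval_prod, prod_eq_zero_iff]
  simp [sub_eq_zero, eq_comm]

theorem exists_perm_forall_apply_eq (hf : f.map (algebraMap R S) = ∏ i, (X - C (a i)))
    (ha : Function.Injective a) (g : S ≃ₐ[R] S) : ∃ σ : Equiv.Perm ι, ∀ i, a (σ i) = g (a i) := by
  have hmem (i) : ∃ j, a j = g (a i) := by
    rw [← Set.mem_range, ← aeval_eq_zero_iff_mem_range hf, ← AlgEquiv.coe_toAlgHom,
      aeval_algHom_apply, (aeval_eq_zero_iff_mem_range hf).2 ⟨i, rfl⟩, map_zero]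
  choose s hs using hmem
  have hinj : Function.Injective s := fun i j hij ↦ ha (g.injective (by rw [← hs, ← hs, hij]))
  exact ⟨.ofBijective s (Finite.injective_iff_bijective.1 hinj), hs⟩

end IsDomain

variable {ι K L : Type*} [Fintype ι] [Field K] [Field L] [Algebra K L] {f : K[X]} {a : ι → L}

theorem mem_normalizedFactors_iff_mem_range_minpoly [DecidableEq K]
    (hf : f.map (algebraMap K L) = ∏ i, (X - C (a i))) (hf0 : f ≠ 0) {p : K[X]} :
    p ∈ normalizedFactors f ↔ p ∈ Set.range fun i ↦ minpoly K (a i) := by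
  rw [mem_normalizedFactors_iff' hf0]
  constructor
  · rintro ⟨hirr, hnorm, hdvd⟩
    have hsplits : (f.map (algebraMap K L)).Splits := hf ▸ .prod fun i _ ↦ .X_sub_C _
    obtain ⟨x, hx⟩ := (hsplits.of_dvd (map_ne_zero hf0) (map_dvd _ hdvd)).exists_eval_eq_zero
      (by simpa using hirr.degree_pos.ne')
    rw [eval_map_algebraMap] at hx
    obtain ⟨i, rfl⟩ :=
      (aeval_eq_zero_iff_mem_range hf).1 (aeval_eq_zero_of_dvd_aeval_eq_zero hdvd hx)
    exact ⟨i, (minpoly.eq_of_irreducible_of_monic hirr hx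
      (hnorm ▸ monic_normalize hirr.ne_zero)).symm⟩
  · rintro ⟨i, rfl⟩
    have hroot : aeval (a i) f = 0 := (aeval_eq_zero_iff_mem_range hf).2 ⟨i, rfl⟩
    have hint : IsIntegral K (a i) := isAlgebraic_iff_isIntegral.1 ⟨f, hf0, hroot⟩
    exact ⟨minpoly.irreducible hint, (minpoly.monic hint).normalize_eq_self, minpoly.dvd _ _ hroot⟩

theorem card_factors_eq_card_quotient_ker_minpoly
    (hf : f.map (algebraMap K L) = ∏ i, (X - C (a i))) (hsf : Squarefree f) :
    Multiset.card (factors f) = Nat.card (Quotient (Setoid.ker fun i ↦ minpoly K (a i))) := by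
  classical
  have hnodup := (squarefree_iff_nodup_normalizedFactors hsf.ne_zero).1 hsf
  have hrange : Set.range (fun i ↦ minpoly K (a i)) =
      ((normalizedFactors f).toFinset : Set K[X]) := by
    ext p
    rw [mem_coe, Multiset.mem_toFinset, mem_normalizedFactors_iff_mem_range_minpoly hf hsf.ne_zero]
  rw [Nat.card_congr (Setoid.quotientKerEquivRange _), hrange, Nat.card_coe_set_eq,
    Set.ncard_coe_finset, Multiset.toFinset_card_of_nodup hnodup]
  simp [normalizedFactors]

end SplitPolynomial

section FrobeniusPerm

open FiniteField (frobeniusAlgEquivOfAlgebraic)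

variable {K L : Type*} [Field K] [Fintype K] [Field L] [Finite L] [Algebra K L]

theorem isConjRoot_iff_exists_frobenius_pow {x y : L} :
    IsConjRoot K x y ↔ ∃ m : ℕ, (frobeniusAlgEquivOfAlgebraic K L ^ m) x = y := by
  rw [IsConjRoot.comm, isConjRoot_iff_exists_algEquiv]
  constructor
  · rintro ⟨g, rfl⟩
    obtain ⟨m, rfl⟩ := (FiniteField.bijective_frobeniusAlgEquivOfAlgebraic_pow K L).2 g
    exact ⟨m, rfl⟩
  · rintro ⟨m, rfl⟩
    exact ⟨_, rfl⟩

variable {ι : Type*} {a : ι → L} {σ : Equiv.Perm ι}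

theorem sameCycle_iff_isConjRoot [Finite ι] (ha : Function.Injective a)
    (hσ : ∀ i, a (σ i) = a i ^ Fintype.card K) {i j : ι} :
    σ.SameCycle i j ↔ IsConjRoot K (a i) (a j) := by
  have hsemi : Function.Semiconj a σ (frobeniusAlgEquivOfAlgebraic K L) := hσ
  have hpow (m : ℕ) : a ((σ ^ m) i) = (frobeniusAlgEquivOfAlgebraic K L ^ m) (a i) := by
    simpa [← Equiv.Perm.iterate_eq_pow] using hsemi.iterate_right m i
  simp_rw [isConjRoot_iff_exists_frobenius_pow, ← hpow, ha.eq_iff]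
  exact ⟨Equiv.Perm.SameCycle.exists_nat_pow_eq, fun ⟨m, hm⟩ ↦ ⟨m, by simpa using hm⟩⟩

theorem sign_eq_neg_one_pow_card_add_card_factors [Fintype ι] [DecidableEq ι] {f : K[X]}
    (hf : f.map (algebraMap K L) = ∏ i, (X - C (a i))) (hsf : Squarefree f)
    (ha : Function.Injective a) (hσ : ∀ i, a (σ i) = a i ^ Fintype.card K) :
    σ.sign = (-1) ^ (Fintype.card ι + Multiset.card (UniqueFactorizationMonoid.factors f)) := by
  have hsetoid : Equiv.Perm.SameCycle.setoid σ = Setoid.ker fun i ↦ minpoly K (a i) :=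
    Setoid.ext fun _ _ ↦ sameCycle_iff_isConjRoot ha hσ
  rw [sign_eq_neg_one_pow_card_add_card_quotient, hsetoid,
    card_factors_eq_card_quotient_ker_minpoly hf hsf]

end FrobeniusPerm

theorem sq_sub_four_mul_modEq_one_iff {s : ℤ} (hs : Odd s) (q : ℤ) :
    s ^ 2 - 4 * q ≡ 1 [ZMOD 8] ↔ 2 ∣ q := by
  have hs8 := Int.eight_dvd_sq_sub_one_of_odd hs
  rw [Int.modEq_iff_dvd]
  lia

theorem neg_one_pow_add_eq_one_iff_modEq (m n : ℕ) :
    (-1 : ℤˣ) ^ (n + m) = 1 ↔ m ≡ n [MOD 2] := by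
  rw [neg_one_pow_eq_one_iff_even (by decide), Nat.even_add, Nat.even_iff, Nat.even_iff, Nat.ModEq]
  lia

theorem odd_resolventTrace_and_two_dvd_resolventNorm_iff {F : ℤ[X]} (hmonic : F.Monic)
    (hsf : Squarefree (F.map (Int.castRingHom (ZMod 2)))) :
    Odd (resolventTrace F.natDegree F) ∧
      (2 ∣ resolventNorm F.natDegree F ↔
        Multiset.card (UniqueFactorizationMonoid.factors (F.map (Int.castRingHom (ZMod 2)))) ≡
          F.natDegree [MOD 2]) := by
  set f := F.map (Int.castRingHom (ZMod 2))
  let L := f.SplittingField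
  have : CharP L 2 := charP_of_injective_algebraMap (algebraMap (ZMod 2) L).injective 2
  have : Finite L := Module.finite_of_finite (ZMod 2)
  have hFf : F.map (algebraMap ℤ L) = f.map (algebraMap (ZMod 2) L) :=
    (congrArg F.map (RingHom.ext_int _ _)).trans (Polynomial.map_map _ _ F).symm
  obtain ⟨a, ha⟩ : ∃ a : Fin F.natDegree → L, F.map (algebraMap ℤ L) = ∏ i, (X - C (a i)) := by
    rw [← hmonic.natDegree_map (algebraMap ℤ L)]
    exact exists_fin_prod_X_sub_C (hFf ▸ SplittingField.splits f) (hmonic.map _)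
  have hfa := hFf.symm.trans ha
  have hinj : Function.Injective a := by
    refine Separable.injective_of_prod_X_sub_C ?_
    rw [← hfa]
    exact (PerfectField.separable_iff_squarefree.2 hsf).map
  obtain ⟨σ, hσ⟩ := exists_perm_forall_apply_eq hfa hinj
    (FiniteField.frobeniusAlgEquivOfAlgebraic (ZMod 2) L)
  replace hσ (i) : a (σ i) = a i ^ 2 := by simpa using hσ i
  have hcast (z : ℤ) : 2 ∣ z ↔ algebraMap ℤ L z = 0 := by
    simpa using (CharP.intCast_eq_zero_iff L 2 z).symm
  constructor
  · rw [← Int.not_even_iff_odd, even_iff_two_dvd, hcast,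
      algebraMap_resolventTrace_eq_one ha hinj hσ]
    exact one_ne_zero
  · rw [hcast, algebraMap_resolventNorm_eq_zero_iff ha hinj hσ,
      sign_eq_neg_one_pow_card_add_card_factors hfa hsf hinj (by simpa using hσ),
      Fintype.card_fin, neg_one_pow_add_eq_one_iff_modEq]

theorem swan_parity_criterion_general {K : Type*} [CommRing K] [CharZero K] {n : ℕ} {F : ℤ[X]}
    (hsf : Squarefree (F.map (Int.castRingHom (ZMod 2)))) {α : Fin n → K}
    (hroots : F.map (Int.castRingHom K) = ∏ i, (X - C (α i))) {D : ℤ}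
    (hD : (D : K) = ∏ i, ∏ j ∈ Ioi i, (α i - α j) ^ 2) :
    (Multiset.card (UniqueFactorizationMonoid.factors (F.map (Int.castRingHom (ZMod 2)))) ≡
        n [MOD 2]) ↔
      D ≡ 1 [ZMOD 8] := by
  have hcast : Function.Injective (Int.castRingHom K) := Int.cast_injective
  have hmonic : F.Monic :=
    Polynomial.monic_of_injective hcast (hroots ▸ monic_prod_of_monic _ _ fun _ _ ↦ monic_X_sub_C _)
  obtain rfl : n = F.natDegree := by
    rw [← natDegree_map_eq_of_injective hcast, hroots, natDegree_finsetProd_X_sub_C_eq_card,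
      card_univ, Fintype.card_fin]
  obtain rfl : D = resolventTrace F.natDegree F ^ 2 - 4 * resolventNorm F.natDegree F :=
    hcast (hD.trans (prod_sub_sq_eq_algebraMap_resolvent hroots))
  obtain ⟨hodd, hdvd⟩ := odd_resolventTrace_and_two_dvd_resolventNorm_iff hmonic hsf
  rw [← hdvd, sq_sub_four_mul_modEq_one_iff hodd]

theorem swan_parity_criterion (n : ℕ) (hn : 1 ≤ n) (f : Polynomial (ZMod 2))
    (hsf : Squarefree f) (hfdeg : f.natDegree = n)
    (F : Polynomial ℤ) (hmonic : F.Monic) (hFdeg : F.natDegree = n)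
    (hred : F.map (Int.castRingHom (ZMod 2)) = f)
    (α : Fin n → ℂ)
    (hroots : F.map (Int.castRingHom ℂ) = ∏ i : Fin n, (X - C (α i)))
    (D : ℤ)
    (hD : (D : ℂ) = ∏ i : Fin n, ∏ j ∈ Finset.Ioi i, (α i - α j) ^ 2) :
    (Multiset.card (UniqueFactorizationMonoid.factors f) ≡ n [MOD 2]) ↔
      D ≡ 1 [ZMOD 8] := by
  subst hred
  exact swan_parity_criterion_general hsf hroots hD
end

section
/- Let s be an even positive integer, n an odd integer with n > 3s, and let α_1, ..., α_n ∈ ℂ be the roots, counted with multiplicity, of F(X) = X^n + X^(n-s) + X^(n-2s) + X^(n-3s) + 1 ∈ ℤ[X]. Then for every odd integer m with 0 < m < n, one has Σ_{i=1}^n α_i^m = 0. In particular S_{n-s} = S_{n-2s} = S_{n-3s} = 0, where S_m := Σ_{i=1}^n α_i^m. -/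
open Polynomial Finset

/-!
By Vieta's formulas, the shape of `F` says that the elementary symmetric function `e_k` of the roots
vanishes for every odd `k < n`. In Newton's identity for `S_m` every term is a multiple of `e_m` or
of some `e_a * S_b` with `a + b = m`. If `m` is odd, then `a` or `b` is odd, so by induction every
term is zero. The same induction works for any additive submonoid of `ℕ` in place of the even
numbers.
-/

section PowerSums

variable {R ι : Type*} [CommRing R] [Fintype ι]

theorem sum_pow_eq_mul_esymm_sub_sum (α : ι → R) {m : ℕ} (hm : 0 < m) :
    ∑ i, α i ^ m = (-1) ^ (m + 1) * m * (univ.val.map α).esymm m -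
      ∑ a ∈ antidiagonal m with a.1 ∈ Set.Ioo 0 m,
        (-1) ^ a.1 * (univ.val.map α).esymm a.1 * ∑ i, α i ^ a.2 := by
  have newton := congrArg (MvPolynomial.aeval α) (MvPolynomial.psum_eq_mul_esymm_sub_sum ι R m hm)
  simpa only [MvPolynomial.psum, map_sub, map_mul, map_pow, map_neg, map_one, map_natCast, map_sum,
    MvPolynomial.aeval_X, MvPolynomial.aeval_esymm_eq_multiset_esymm] using newton

theorem sum_pow_eq_zero_of_esymm_eq_zero (M : AddSubmonoid ℕ) (α : ι → R) {m : ℕ}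
    (he : ∀ k ≤ m, k ∉ M → (univ.val.map α).esymm k = 0) (hm : m ∉ M) :
    ∑ i, α i ^ m = 0 := by
  induction m using Nat.strong_induction_on with
  | _ m ih =>
    have hm0 : 0 < m := Nat.pos_of_ne_zero fun h ↦ hm (h ▸ M.zero_mem)
    rw [sum_pow_eq_mul_esymm_sub_sum α hm0, he m le_rfl hm, mul_zero, zero_sub, neg_eq_zero]
    refine sum_eq_zero fun ⟨a, b⟩ hab ↦ ?_
    obtain ⟨rfl, ha, -⟩ : a + b = m ∧ 0 < a ∧ a < m := by simpa using hab
    by_cases haM : a ∈ M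
    · have hbM : b ∉ M := fun hbM ↦ hm (M.add_mem haM hbM)
      rw [ih b (by lia) (fun k hk ↦ he k (by lia)) hbM, mul_zero]
    · rw [he a (by lia) haM, mul_zero, zero_mul]

theorem coeff_prod_X_sub_C (α : ι → R) {j k : ℕ} (hjk : j + k = Fintype.card ι) :
    (∏ i, (X - C (α i))).coeff j = (-1) ^ k * (univ.val.map α).esymm k := by
  have hk : (univ.val.map α).card - j = k := by simp [← hjk]
  have vieta := Multiset.prod_X_sub_C_coeff (univ.val.map α) (k := j) (by simp [← hjk])
  rwa [hk, Multiset.map_map] at vieta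

theorem odd_power_sums_vanish_general (M : AddSubmonoid ℕ) {α : ι → R} {p : R[X]}
    (hroots : p = ∏ i, (X - C (α i))) {m : ℕ}
    (hcoeff : ∀ j k, j + k = Fintype.card ι → k ≤ m → k ∉ M → p.coeff j = 0) (hm : m ∉ M) :
    ∑ i, α i ^ m = 0 := by
  refine sum_pow_eq_zero_of_esymm_eq_zero M α (fun k hkm hkM ↦ ?_) hm
  obtain hk | hk := le_or_gt k (Fintype.card ι)
  · have hjk := Nat.sub_add_cancel hk
    have hcoeff_zero := hcoeff _ k hjk hkm hkM
    rwa [hroots, coeff_prod_X_sub_C α hjk, neg_one_pow_mul_eq_zero_iff] at hcoeff_zero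
  · simp [Multiset.esymm, Multiset.powersetCard_eq_empty k (s := univ.val.map α) (by simpa)]

end PowerSums

theorem coeff_sum_X_pow_sub_mul_eq_zero_of_not_dvd {R : Type*} [Semiring R] (T : Finset ℕ)
    {s j k : ℕ} (hj : j ≠ 0) (hk : ¬ s ∣ k) :
    (∑ c ∈ T, X ^ (j + k - c * s) : R[X]).coeff j = 0 := by
  have hne (c : ℕ) : j ≠ j + k - c * s := fun h ↦ hk ⟨c, by lia⟩
  simp only [finsetSum_coeff, coeff_X_pow, hne, if_false, sum_const_zero]

theorem coeff_quintinomial_eq_zero_of_not_dvd {R : Type*} [Semiring R] {s j k : ℕ} (hj : j ≠ 0)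
    (hk : ¬ s ∣ k) :
    (X ^ (j + k) + X ^ (j + k - s) + X ^ (j + k - 2 * s) + X ^ (j + k - 3 * s) + 1 :
      R[X]).coeff j = 0 := by
  have gaps := coeff_sum_X_pow_sub_mul_eq_zero_of_not_dvd (R := R) (range 4) hj hk
  simp only [sum_range_succ, range_zero, sum_empty, zero_add, zero_mul, one_mul, Nat.sub_zero]
    at gaps
  rw [coeff_add, gaps, coeff_one, if_neg hj, add_zero]

theorem odd_power_sums_vanish (s n : ℕ) (hs : Even s) (hs0 : 0 < s)
    (hodd : Odd n) (hn : 3 * s < n) (α : Fin n → ℂ)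
    (hroots : (X ^ n + X ^ (n - s) + X ^ (n - 2 * s) + X ^ (n - 3 * s) + 1 :
        Polynomial ℤ).map (Int.castRingHom ℂ) =
      ∏ i : Fin n, (X - C (α i))) :
    (∀ m : ℕ, Odd m → 0 < m → m < n → ∑ i : Fin n, (α i) ^ m = 0) ∧
    (∑ i : Fin n, (α i) ^ (n - s) = 0) ∧
    (∑ i : Fin n, (α i) ^ (n - 2 * s) = 0) ∧
    (∑ i : Fin n, (α i) ^ (n - 3 * s) = 0) := by
  have vanish (m : ℕ) (hm : Odd m) (hmn : m < n) : ∑ i, α i ^ m = 0 := by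
    refine odd_power_sums_vanish_general (.even ℕ) hroots (fun j k hjk hkm hk ↦ ?_) (by simpa)
    obtain rfl : j + k = n := by simpa using hjk
    have hsk : ¬ s ∣ k := fun h ↦ hk (hs.trans_dvd h)
    rw [coeff_map, coeff_quintinomial_eq_zero_of_not_dvd (by lia) hsk, map_zero]
  have odd_sub (c : ℕ) (hc : c * s ≤ n) : Odd (n - c * s) :=
    Nat.Odd.sub_even hc hodd (hs.mul_left c)
  exact ⟨fun m hm _ ↦ vanish m hm,
    vanish _ (by simpa using odd_sub 1 (by lia)) (by lia),
    vanish _ (odd_sub 2 (by lia)) (by lia),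
    vanish _ (odd_sub 3 hn.le) (by lia)⟩
end

section
/- Let s be an even positive integer, n an odd integer with n > 3s, and let α_1, ..., α_n ∈ ℂ be the roots, counted with multiplicity, of F(X) = X^n + X^(n-s) + X^(n-2s) + X^(n-3s) + 1 ∈ ℤ[X]. Then S_{2n-2s} = S_{2n-6s}, where S_m := Σ_{i=1}^n α_i^m. -/
/-!
Put `m = n - 3s`, so that `F = X ^ m * (1 + X ^ s + X ^ (2s) + X ^ (3s)) + 1`. Summing the geometric
progression gives
`X ^ m * (X ^ s - 1) * F = X ^ (2n - 2s) - X ^ (2n - 6s) + X ^ (n - 2s) - X ^ (n - 3s)`,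
and evaluating at the roots shows `S_{2n-2s} - S_{2n-6s} = S_{n-3s} - S_{n-2s}`. Among the
elementary symmetric functions of degree less than `n`, only those of degree divisible by `s` can be
nonzero at the roots. Since the multiples of `s` are closed under addition, Newton's identities
transfer this to the power sums. As `s` is even and `n` odd, `s` does not divide `n`, and both power
sums on the right-hand side vanish.
-/

open Polynomial Finset

section SymmetricFunctions

variable {ι R : Type*} [Fintype ι] [CommRing R] (α : ι → R)

theorem aeval_esymm_eq_coeff_prod_X_sub_C {j : ℕ} (hj : j ≤ Fintype.card ι) :
    MvPolynomial.aeval α (MvPolynomial.esymm ι R j) =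
      (-1) ^ j * (∏ i, (X - C (α i))).coeff (Fintype.card ι - j) := by
  have vieta : (∏ i, (X - C (α i))).coeff (Fintype.card ι - j) =
      (-1) ^ j * (univ.val.map α).esymm j := by
    rw [prod_eq_multiset_prod]
    simpa only [Multiset.map_map, Function.comp_def, Multiset.card_map, card_val, card_univ,
      Nat.sub_sub_self hj] using
      Multiset.prod_X_sub_C_coeff (univ.val.map α) (k := Fintype.card ι - j) (by simp)
  rw [MvPolynomial.aeval_esymm_eq_multiset_esymm, vieta, ← mul_assoc, ← mul_pow, neg_one_mul,
    neg_neg, one_pow, one_mul]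

theorem sum_pow_eq_zero_of_aeval_esymm_eq_zero (M : AddSubmonoid ℕ) {k : ℕ} (hk : k ∉ M)
    (hα : ∀ j ≤ k, j ∉ M → MvPolynomial.aeval α (MvPolynomial.esymm ι R j) = 0) :
    ∑ i, α i ^ k = 0 := by
  induction k using Nat.strong_induction_on with
  | _ k ih =>
    have hk0 : 0 < k := Nat.pos_of_ne_zero fun h => hk (h ▸ M.zero_mem)
    have newton := congrArg (MvPolynomial.aeval α)
      (MvPolynomial.psum_eq_mul_esymm_sub_sum ι R k hk0)
    simp only [MvPolynomial.psum, map_sub, map_mul, map_sum, map_pow, MvPolynomial.aeval_X,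
      hα k le_rfl hk, mul_zero, zero_sub] at newton
    rw [newton, neg_eq_zero]
    refine sum_eq_zero fun ⟨a, b⟩ hab => ?_
    obtain ⟨rfl, ha, -⟩ : a + b = k ∧ 0 < a ∧ a < k := by simpa using hab
    by_cases haM : a ∈ M
    · have hbM : b ∉ M := fun hbM => hk (M.add_mem haM hbM)
      rw [ih b (by lia) hbM fun j hj => hα j (by lia), mul_zero]
    · rw [hα a (by lia) haM, mul_zero, zero_mul]

end SymmetricFunctions

section ShiftedGeomSum

variable {R : Type*} [CommRing R]

/-- The polynomial `X ^ m * (1 + X ^ s + ⋯ + X ^ (r * s)) + c`, with the factor `X ^ m` distributed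
over the geometric sum. The polynomial `F` of the main theorem is the case `m = n - 3 * s`, `r = 3`,
`c = 1`. -/
noncomputable def shiftedGeomSum (m s r : ℕ) (c : R) : R[X] :=
  ∑ i ∈ range (r + 1), X ^ (m + i * s) + C c

theorem coeff_shiftedGeomSum_eq_zero {m s r j : ℕ} (c : R) (hsj : ¬ s ∣ j) (hj : j < m + r * s) :
    (shiftedGeomSum m s r c).coeff (m + r * s - j) = 0 := by
  have hexp : ∀ i ∈ range (r + 1), m + r * s - j ≠ m + i * s := fun i hi h => by
    obtain ⟨d, rfl⟩ := Nat.exists_eq_add_of_le (mem_range_succ_iff.1 hi)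
    rw [add_mul] at h hj
    exact hsj ⟨d, by lia⟩
  rw [shiftedGeomSum, coeff_add, finsetSum_coeff, coeff_C_of_ne_zero (Nat.sub_ne_zero_of_lt hj),
    add_zero]
  exact sum_eq_zero fun i hi => by rw [coeff_X_pow, if_neg (hexp i hi)]

theorem mul_eval_shiftedGeomSum (m s r : ℕ) (c x : R) :
    x ^ m * (x ^ s - 1) * (shiftedGeomSum m s r c).eval x =
      x ^ (2 * m + (r + 1) * s) - x ^ (2 * m) + c * (x ^ (m + s) - x ^ m) := by
  have heval : (shiftedGeomSum m s r c).eval x = x ^ m * ∑ i ∈ range (r + 1), (x ^ s) ^ i + c := by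
    simp [shiftedGeomSum, eval_finsetSum, mul_sum, pow_add, pow_mul']
  have hgeom := mul_geom_sum (x ^ s) (r + 1)
  rw [← pow_mul'] at hgeom
  rw [heval]
  linear_combination (x ^ m) ^ 2 * hgeom

variable {ι : Type*} [Fintype ι] {m s r : ℕ} {c : R} {α : ι → R}

theorem sum_pow_eq_zero_of_prod_eq_shiftedGeomSum {k : ℕ} (hcard : Fintype.card ι = m + r * s)
    (hα : ∏ i, (X - C (α i)) = shiftedGeomSum m s r c) (hsk : ¬ s ∣ k) (hk : k < m + r * s) :
    ∑ i, α i ^ k = 0 := by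
  have mem_multiples (j : ℕ) : j ∈ AddSubmonoid.multiples s ↔ s ∣ j := by
    simp [AddSubmonoid.mem_multiples_iff, dvd_def, mul_comm, eq_comm]
  refine sum_pow_eq_zero_of_aeval_esymm_eq_zero α (AddSubmonoid.multiples s)
    (mt (mem_multiples k).1 hsk) fun j hjk hj => ?_
  rw [aeval_esymm_eq_coeff_prod_X_sub_C α (by lia), hα, hcard,
    coeff_shiftedGeomSum_eq_zero c (mt (mem_multiples j).2 hj) (by lia), mul_zero]

theorem sum_pow_eq_sum_pow_of_prod_eq_shiftedGeomSum (hcard : Fintype.card ι = m + r * s)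
    (hα : ∏ i, (X - C (α i)) = shiftedGeomSum m s r c) (hr : 2 ≤ r) (hsm : ¬ s ∣ m) :
    ∑ i, α i ^ (2 * m + (r + 1) * s) = ∑ i, α i ^ (2 * m) := by
  rcases s.eq_zero_or_pos with rfl | hs
  · simp
  have hlt : m + s < m + r * s := by nlinarith
  have hpow (i : ι) : α i ^ (2 * m + (r + 1) * s) =
      α i ^ (2 * m) - c * (α i ^ (m + s) - α i ^ m) := by
    have hroot : (shiftedGeomSum m s r c).eval (α i) = 0 := by
      rw [← hα, eval_prod, prod_eq_zero (mem_univ i) (by simp)]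
    linear_combination (α i ^ m * (α i ^ s - 1)) * hroot - mul_eval_shiftedGeomSum m s r c (α i)
  have hsum_add : ∑ i, α i ^ (m + s) = 0 :=
    sum_pow_eq_zero_of_prod_eq_shiftedGeomSum hcard hα (by simpa using hsm) hlt
  have hsum : ∑ i, α i ^ m = 0 :=
    sum_pow_eq_zero_of_prod_eq_shiftedGeomSum hcard hα hsm (by lia)
  simp only [hpow, sum_sub_distrib, ← mul_sum, hsum_add, hsum, sub_zero, mul_zero]

end ShiftedGeomSum

theorem S_two_n_sub_two_s_eq_general {R : Type*} [CommRing R] {s n : ℕ} (hsn : ¬ s ∣ n)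
    (hn : 3 * s ≤ n) (c : R) (α : Fin n → R)
    (hroots : X ^ n + X ^ (n - s) + X ^ (n - 2 * s) + X ^ (n - 3 * s) + C c =
      ∏ i : Fin n, (X - C (α i))) :
    ∑ i : Fin n, α i ^ (2 * n - 2 * s) = ∑ i : Fin n, α i ^ (2 * n - 6 * s) := by
  obtain ⟨m, rfl⟩ := Nat.exists_eq_add_of_le' hn
  have hα : ∏ i, (X - C (α i)) = shiftedGeomSum m s 3 c := by
    rw [← hroots, shiftedGeomSum, show m + 3 * s - s = m + 2 * s by lia,
      show m + 3 * s - 2 * s = m + s by lia, Nat.add_sub_cancel]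
    simp only [sum_range_succ, sum_range_zero]
    ring
  have hsm : ¬ s ∣ m := fun h => hsn (h.add (dvd_mul_left s 3))
  rw [show 2 * (m + 3 * s) - 2 * s = 2 * m + (3 + 1) * s by lia,
    show 2 * (m + 3 * s) - 6 * s = 2 * m by lia]
  exact sum_pow_eq_sum_pow_of_prod_eq_shiftedGeomSum (Fintype.card_fin _) hα (by simp) hsm

theorem S_two_n_sub_two_s_eq (s n : ℕ) (hs : Even s) (hs0 : 0 < s)
    (hodd : Odd n) (hn : 3 * s < n) (α : Fin n → ℂ)
    (hroots : (X ^ n + X ^ (n - s) + X ^ (n - 2 * s) + X ^ (n - 3 * s) + 1 :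
        Polynomial ℤ).map (Int.castRingHom ℂ) =
      ∏ i : Fin n, (X - C (α i))) :
    ∑ i : Fin n, (α i) ^ (2 * n - 2 * s) = ∑ i : Fin n, (α i) ^ (2 * n - 6 * s) :=
  S_two_n_sub_two_s_eq_general (fun hsn => Nat.not_even_iff_odd.2 hodd (hs.trans_dvd hsn)) hn.le 1
    α (by simpa using hroots)
end
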